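/- Let (Q,I) be a gentle bound quiver with Cartan matrix C, and let δ := 1 if (Q,I) satisfies the multi-clock condition and δ := 0 otherwise. Then the rank over ℚ of the symmetric matrix C + C^tr equals 2|Q0| − |Q1| − δ; equivalently, its corank equals |Q1| − |Q0| + δ. -/

import Mathlib

set_option autoImplicit false

attribute [local instance] Classical.propDecidable

/-- A bound-quiver datum: a quiver (source and target maps on a set of arrows) together
with a set of length-two relations; `rel a b` means that the length-two path `ab`
(composable, i.e. `src a = tgt b`; paths are written from right to left) lies in the
generating set of relations of the ideal `I`. -/
structure BQuiv (V A : Type) where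
  src : A → V
  tgt : A → V
  rel : A → A → Prop

namespace BQuiv

variable {V A : Type}

/-- `l` is (the list of arrows of) a path of the quiver, written from right to left:
`l = [a₁, a₂, …, a_ℓ]` represents `a₁a₂⋯a_ℓ` and we ask `src aₜ = tgt aₜ₊₁`. -/
def PathChain (Q : BQuiv V A) (l : List A) : Prop :=
  l.Chain' (fun a b => Q.src a = Q.tgt b)

/-- The degree of a vertex: the number of outgoing plus the number of incoming arrows. -/
noncomputable def deg (Q : BQuiv V A) (v : V) : ℕ :=
  Nat.card {a : A // Q.src a = v} + Nat.card {a : A // Q.tgt a = v}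

/-- `(Q, I)` is a gentle bound quiver. -/
structure IsGentle (Q : BQuiv V A) : Prop where
  /-- relations are composable length-two paths -/
  rel_comp : ∀ a b, Q.rel a b → Q.src a = Q.tgt b
  /-- at most two outgoing arrows at every vertex -/
  out_le : ∀ v, Nat.card {a : A // Q.src a = v} ≤ 2
  /-- at most two incoming arrows at every vertex -/
  in_le : ∀ v, Nat.card {a : A // Q.tgt a = v} ≤ 2
  /-- for every arrow `b` there is at most one arrow `a` with `ab ∉ I` -/
  unique_nonrel_post : ∀ b a a', Q.src a = Q.tgt b → Q.src a' = Q.tgt b →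
    ¬ Q.rel a b → ¬ Q.rel a' b → a = a'
  /-- for every arrow `b` there is at most one arrow `c` with `bc ∉ I` -/
  unique_nonrel_pre : ∀ b c c', Q.src b = Q.tgt c → Q.src b = Q.tgt c' →
    ¬ Q.rel b c → ¬ Q.rel b c' → c = c'
  /-- for every arrow `b` there is at most one arrow `a` with `ab ∈ I` -/
  unique_rel_post : ∀ b a a', Q.rel a b → Q.rel a' b → a = a'
  /-- for every arrow `b` there is at most one arrow `c` with `bc ∈ I` -/
  unique_rel_pre : ∀ b c c', Q.rel b c → Q.rel b c' → c = c'
  /-- admissibility: there is `m ≥ 2` such that every path of length `m` contains a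
  length-two subpath lying in the relation set -/
  admissible : ∃ m, 2 ≤ m ∧ ∀ l : List A, l.length = m → Q.PathChain l →
    ¬ l.Chain' (fun a b => ¬ Q.rel a b)
  /-- the quiver is connected -/
  connected : ∀ u v : V, Relation.ReflTransGen
    (fun x y => ∃ a, (Q.src a = x ∧ Q.tgt a = y) ∨ (Q.src a = y ∧ Q.tgt a = x)) u v
  /-- the quiver has at least one arrow -/
  has_arrow : Nonempty A

/-- A path of the quiver `Q`, with a base (source) vertex so that trivial paths make
sense.  The arrows are written from right to left. -/
structure Path (Q : BQuiv V A) where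
  base : V
  arrows : List A
  chain : arrows.Chain' (fun a b => Q.src a = Q.tgt b)
  base_eq : ∀ a, arrows.getLast? = some a → Q.src a = base

variable {Q : BQuiv V A}

/-- The source vertex of a path. -/
def Path.srcV (p : Path Q) : V := p.base

/-- The target vertex of a path. -/
def Path.tgtV (p : Path Q) : V := p.arrows.head?.elim p.base Q.tgt

/-- The vertex of a path sitting between its first `n` arrows and the rest:
the center of the corresponding split of the path. -/
def Path.vertexAt (p : Path Q) (n : ℕ) : V :=
  (p.arrows.drop n).head?.elim p.base Q.tgt

/-- A path is permitted if none of its length-two subpaths is a relation. -/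
def Path.Permitted (p : Path Q) : Prop :=
  p.arrows.Chain' (fun a b => ¬ Q.rel a b)

/-- A path is forbidden if each of its length-two subpaths is a relation. -/
def Path.Forbidden (p : Path Q) : Prop :=
  p.arrows.Chain' (fun a b => Q.rel a b)

/-- Permitted threads: maximal non-trivial permitted paths, together with the trivial
paths `e_i` at vertices `i` with `deg i = 1`, or `deg i = 2` with the two arrows
`α, β` at `i` satisfying `src α = tgt β = i` and `αβ ∉ I`. -/
def IsPermThread (Q : BQuiv V A) (p : Path Q) : Prop :=
  (p.arrows ≠ [] ∧ p.Permitted ∧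
    (∀ a b, p.arrows.head? = some b → Q.src a = Q.tgt b → Q.rel a b) ∧
    (∀ a c, p.arrows.getLast? = some a → Q.src a = Q.tgt c → Q.rel a c)) ∨
  (p.arrows = [] ∧ (Q.deg p.base = 1 ∨ (Q.deg p.base = 2 ∧
    ∃ α β, Q.src α = p.base ∧ Q.tgt β = p.base ∧ ¬ Q.rel α β)))

/-- Forbidden threads: maximal non-trivial forbidden paths, together with the trivial
paths `e_i` at vertices `i` with `deg i = 1`, or `deg i = 2` with the two arrows
`α, β` at `i` satisfying `src α = tgt β = i` and `αβ ∈ I`. -/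
def IsForbThread (Q : BQuiv V A) (p : Path Q) : Prop :=
  (p.arrows ≠ [] ∧ p.Forbidden ∧
    (∀ a b, p.arrows.head? = some b → Q.src a = Q.tgt b → ¬ Q.rel a b) ∧
    (∀ a c, p.arrows.getLast? = some a → Q.src a = Q.tgt c → ¬ Q.rel a c)) ∨
  (p.arrows = [] ∧ (Q.deg p.base = 1 ∨ (Q.deg p.base = 2 ∧
    ∃ α β, Q.src α = p.base ∧ Q.tgt β = p.base ∧ Q.rel α β)))

end BQuiv

namespace BQuiv

variable {V A : Type}

/-- The type of permitted threads of `(Q, I)`: the vertices of the associated marked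
ribbon graph `△(Q, I)`. -/
def PThread (Q : BQuiv V A) : Type := {p : Path Q // IsPermThread Q p}

/-- The type of split permitted threads of `(Q, I)`: a permitted thread together with a
cut position.  These are the half-edges of the associated marked ribbon graph
`△(Q, I)`. -/
def PSplit (Q : BQuiv V A) : Type := {x : PThread Q × ℕ // x.2 ≤ x.1.1.arrows.length}

/-- The thread (vertex of `△(Q, I)`) over which a split permitted thread lies. -/
def PSplit.thread {Q : BQuiv V A} (x : PSplit Q) : PThread Q := x.1.1

/-- The cut position of a split permitted thread. -/
def PSplit.idx {Q : BQuiv V A} (x : PSplit Q) : ℕ := x.1.2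

/-- The center of a split permitted thread `(η″, η′)`: the vertex `s(η″) = t(η′)`.
The centers realize the bijection between the edges of `△(Q, I)` and the vertices
of `Q`. -/
def PSplit.center {Q : BQuiv V A} (x : PSplit Q) : V :=
  x.1.1.1.vertexAt x.1.2

end BQuiv

namespace BQuiv

variable {V A : Type}

/-- The Cartan matrix of the gentle algebra `kQ/I`: its `(i, j)` entry is the number of
permitted paths with source `j` and target `i` (which equals `dim_k Hom(P_i, P_j)`). -/
noncomputable def cartan (Q : BQuiv V A) : Matrix V V ℤ :=
  fun i j => (Nat.card {p : Path Q // p.Permitted ∧ p.base = j ∧ p.tgtV = i} : ℤ)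

/-- The (edge-vertex) incidence matrix of the marked ribbon graph `△(Q, I)`, with edges
identified with `Q₀` (via centers) and vertices with the permitted threads (transported
along a bijection `e` with a finite index type `W`): the entry at `(i, w)` is the number
of half-edges of the edge `i` incident to the vertex `e w`, i.e. the number of split
permitted threads with center `i` lying over the thread `e w`. -/
noncomputable def dInc (Q : BQuiv V A) {W : Type} (e : W ≃ PThread Q) : Matrix V W ℤ :=
  fun i w => (Nat.card {x : PSplit Q // x.center = i ∧ x.thread = e w} : ℤ)

end BQuiv

namespace BQuiv

variable {V A : Type}

/-- A letter of a walk of the quiver: an arrow `(a, true)` or a formal inverse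
`(a, false)`. -/
abbrev Letter (A : Type) : Type := A × Bool

/-- The source vertex of a letter. -/
def lsrc (Q : BQuiv V A) (c : Letter A) : V := if c.2 then Q.src c.1 else Q.tgt c.1

/-- The target vertex of a letter. -/
def ltgt (Q : BQuiv V A) (c : Letter A) : V := if c.2 then Q.tgt c.1 else Q.src c.1

/-- The inverse of a letter. -/
def linv (c : Letter A) : Letter A := (c.1, !c.2)

/-- `l` is (the list of letters of) a walk of the quiver, written from right to left. -/
def WalkChain (Q : BQuiv V A) (l : List (Letter A)) : Prop :=
  l.Chain' (fun c d => Q.lsrc c = Q.ltgt d)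

/-- A walk is closed when its source equals its target. -/
def WalkClosed (Q : BQuiv V A) (l : List (Letter A)) : Prop :=
  ∀ c, l.head? = some c → ∀ d, l.getLast? = some d → Q.lsrc d = Q.ltgt c

/-- A walk has no repeated edges when no arrow occurs twice (in either direction). -/
def NoRepeatedEdges (l : List (Letter A)) : Prop := (l.map Prod.fst).Nodup

/-- The number of relations of `R` contained in the closed walk `w = c₁⋯c_ℓ`: the
number of length-two subpaths of `w` or of `w⁻¹` lying in `R`, including the
wrap-around pairs `c_ℓc₁` and `c₁⁻¹c_ℓ⁻¹` when they consist of arrows and lie in `R`.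
(Computed over the cyclically consecutive pairs of letters of `w`.) -/
noncomputable def relCount (Q : BQuiv V A) (l : List (Letter A)) : ℕ :=
  ((l.zip (l.rotate 1)).map (fun cd =>
    if (cd.1.2 = true ∧ cd.2.2 = true ∧ Q.rel cd.1.1 cd.2.1) ∨
       (cd.1.2 = false ∧ cd.2.2 = false ∧ Q.rel cd.2.1 cd.1.1)
    then (1 : ℕ) else 0)).sum

/-- `(Q, I)` satisfies the multi-clock condition: every non-trivial closed walk of `Q`
without repeated edges contains an even number of relations. -/
def MultiClock (Q : BQuiv V A) : Prop :=
  ∀ l : List (Letter A), l ≠ [] → Q.WalkChain l → Q.WalkClosed l →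
    NoRepeatedEdges l → Even (Q.relCount l)

end BQuiv

open BQuiv
open scoped Matrix

/-!
In a gentle quiver the two strands through each vertex can be labelled by `Bool` so that a path of
length two stays on its strand exactly when it is not a relation. Let `P : V × Bool → V` forget
the strand, and let `S`, `T` send an arrow to the strands of its tail and head; as incidence
matrices these satisfy `SᵀS = TᵀT = 1`. Permitted paths follow the strands, so
`E = (1 - TSᵀ)⁻¹` counts them between strands and `C = PEPᵀ - 1`. As `PPᵀ = 2`,
`C + Cᵀ = P(E + Eᵀ - 1)Pᵀ`, and `E + Eᵀ - 1 = XXᵀ` with `X = E(1 - TTᵀ)`.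

Hence `C + Cᵀ` is the Gram matrix of `PX`. The range of `X` is the kernel of `Tᵀ - Sᵀ`, of dimension
`2|Q₀| - |Q₁|`. Its intersection with the kernel of `P` consists of the functions that are opposite
on the two strands of each vertex and agree at the two ends of each arrow: these are the potentials
of a signed graph on `Q`, and by connectedness they form a line if every closed walk has sign `1`
and vanish otherwise. The sign of a closed walk without repeated edges is `(-1) ^ n(w)`, and closed
walks decompose into such ones, so balance is the multi-clock condition.
-/

theorem isChain_and_iff {α : Type*} {r s : α → α → Prop} {l : List α} :
    l.IsChain (fun a b => r a b ∧ s a b) ↔ l.IsChain r ∧ l.IsChain s := by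
  simp only [List.isChain_iff_getElem, ← forall_and]

theorem exists_append_of_not_nodup_map {α β : Type*} {f : α → β} {l : List α}
    (h : ¬ (l.map f).Nodup) :
    ∃ x c y d z, l = x ++ c :: (y ++ d :: z) ∧ f c = f d := by
  rw [List.Nodup, List.pairwise_map, List.pairwise_iff_forall_sublist] at h
  push Not at h
  obtain ⟨c, d, hsub, hcd⟩ := h
  obtain ⟨r, s, rfl, hc, hd⟩ := List.cons_sublist_iff.1 hsub
  obtain ⟨x, y, rfl⟩ := List.append_of_mem hc
  obtain ⟨y', z, rfl⟩ := List.append_of_mem (List.singleton_sublist.1 hd)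
  exact ⟨x, c, y ++ y', d, z, by simp, hcd⟩

theorem exists_injective_prodMk {α β γ : Type*} [Finite α] [Finite γ] {f : α → β}
    (h : ∀ b, Nat.card {a // f a = b} ≤ Nat.card γ) :
    ∃ s : α → γ, (fun a => (f a, s a)).Injective := by
  have hemb : ∀ b, Nonempty ({a // f a = b} ↪ γ) := fun b => by
    have := Fintype.ofFinite γ
    have := Fintype.ofFinite {a // f a = b}
    exact Function.Embedding.nonempty_of_card_le (by simpa using h b)
  let e b := (hemb b).some
  have he : ∀ a b (h : f a = b), e (f a) ⟨a, rfl⟩ = e b ⟨a, h⟩ := by rintro a _ rfl; rfl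
  refine ⟨fun a => e (f a) ⟨a, rfl⟩, fun a a' h => ?_⟩
  obtain ⟨hf, hs⟩ := Prod.mk.inj h
  exact congrArg Subtype.val ((e (f a')).injective ((he a _ hf).symm.trans hs))

theorem neg_one_pow_sum_map {α M : Type*} [Monoid M] [HasDistribNeg M] (f : α → ℕ) (l : List α) :
    (-1 : M) ^ (l.map f).sum = (l.map fun a => (-1 : M) ^ f a).prod := by
  induction l with
  | nil => simp
  | cons a l ih => simp [pow_add, ih]

theorem prod_map_zip {α β M : Type*} [CommMonoid M] (f : α → M) (g : β → M) {l : List α}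
    {l' : List β} (h : l.length = l'.length) :
    ((l.zip l').map fun p => f p.1 * g p.2).prod = (l.map f).prod * (l'.map g).prod := by
  rw [List.prod_mul_prod_eq_prod_zipWith_of_length_eq _ _ (by simpa using h), List.zipWith_map,
    List.map_zip_eq_zipWith]
  rfl

section ChainCounting

variable {α : Type*} (R : Type*) [Ring R]

/-- The 0-1 matrix of a relation: for the arrow relation of a graph, its adjacency matrix. -/
noncomputable def relMatrix (r : α → α → Prop) : Matrix α α R :=
  Matrix.of fun a b => if r a b then 1 else 0

/-- The chains `a = a₁, a₂, …, aₙ = b` with `r aₜ aₜ₊₁`, encoded by their tails `[a₂, …, aₙ]`. -/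
def ChainTail (r : α → α → Prop) (a b : α) : Type _ :=
  {l : List α // (a :: l).IsChain r ∧ (a :: l).getLast? = some b}

/-- The matrix counting the `r`-chains from `a` to `b`, of all lengths: the sum of the powers of
`relMatrix R r` when there are finitely many chains. -/
noncomputable def chainMatrix (r : α → α → Prop) : Matrix α α R :=
  Matrix.of fun a b => (Nat.card (ChainTail r a b) : R)

variable {r : α → α → Prop}

/-- A chain is either trivial or continues from its second element. -/
def ChainTail.equivSum (r : α → α → Prop) (a b : α) :
    ChainTail r a b ≃ PLift (a = b) ⊕ Σ c : {c // r a c}, ChainTail r c b where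
  toFun
    | ⟨[], h⟩ => .inl ⟨by simpa using h⟩
    | ⟨c :: l, h⟩ => .inr ⟨⟨c, (List.isChain_cons_cons.1 h.1).1⟩,
        ⟨l, (List.isChain_cons_cons.1 h.1).2, by simpa using h.2⟩⟩
  invFun
    | .inl h => ⟨[], by simpa using h.down⟩
    | .inr ⟨c, l⟩ => ⟨c :: l.1, List.isChain_cons_cons.2 ⟨c.2, l.2.1⟩, by simpa using l.2.2⟩
  left_inv := by rintro ⟨_ | ⟨c, l⟩, h⟩ <;> rfl
  right_inv := by rintro (h | ⟨c, l⟩) <;> rfl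

theorem ChainTail.finite (h : {l : List α | l.IsChain r}.Finite) (a b : α) :
    Finite (ChainTail r a b) :=
  h.subset fun _ hl => hl.1.tail

theorem card_plift (p : Prop) : Nat.card (PLift p) = if p then 1 else 0 := by
  by_cases h : p <;> simp [h]

theorem one_sub_relMatrix_mul_chainMatrix [Fintype α] [DecidableEq α]
    (h : {l : List α | l.IsChain r}.Finite) :
    (1 - relMatrix R r) * chainMatrix R r = 1 := by
  have := ChainTail.finite h
  rw [sub_mul, one_mul, sub_eq_iff_eq_add]
  ext a b
  calc chainMatrix R r a b
      = (if a = b then 1 else 0) + ∑ c : {c // r a c}, chainMatrix R r c b := by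
        simp [chainMatrix, Nat.card_congr (ChainTail.equivSum r a b), Nat.card_sum,
          Nat.card_sigma, card_plift, -Nat.card_eq_fintype_card]
    _ = (1 + relMatrix R r * chainMatrix R r) a b := by
        simp [Matrix.one_apply, Matrix.mul_apply, relMatrix, ← Finset.sum_filter,
          Finset.sum_subtype (p := r a) {c | r a c} (by simp)]

end ChainCounting

section Incidence

variable {α β γ : Type*} (R : Type*) [CommRing R]

/-- The incidence matrix of a map `f : α → β`: its column at `a` is the basis vector at `f a`. -/
noncomputable def incidence (f : α → β) : Matrix β α R :=
  Matrix.of fun b a => if f a = b then 1 else 0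

theorem incidence_transpose_mul_incidence [Fintype β] (f : α → β) (g : γ → β) :
    (incidence R f)ᵀ * incidence R g = Matrix.of fun a c => if f a = g c then 1 else 0 := by
  ext a c
  simp [incidence, Matrix.mul_apply, eq_comm]

theorem incidence_transpose_mul_self [Fintype β] [DecidableEq α] {f : α → β} (hf : f.Injective) :
    (incidence R f)ᵀ * incidence R f = 1 := by
  ext a c
  simp [incidence_transpose_mul_incidence, hf.eq_iff, Matrix.one_apply]

theorem incidence_mul_incidence [Fintype β] (g : β → γ) (f : α → β) :
    incidence R g * incidence R f = incidence R (g ∘ f) := by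
  ext c a
  simp [incidence, Matrix.mul_apply]

theorem incidence_fst_mul_transpose [Fintype α] [DecidableEq α] [Fintype β] :
    incidence R (Prod.fst : α × β → α) * (incidence R (Prod.fst : α × β → α))ᵀ =
      Fintype.card β := by
  ext a a'
  simp only [incidence, Matrix.mul_apply, Fintype.sum_prod_type, Matrix.transpose_apply,
    Matrix.of_apply, Matrix.natCast_apply]
  obtain rfl | h := eq_or_ne a a' <;> simp [*, Ne.symm]

theorem incidence_fst_bool_mul_transpose [Fintype α] [DecidableEq α] :
    incidence R (Prod.fst : α × Bool → α) * (incidence R (Prod.fst : α × Bool → α))ᵀ = 1 + 1 := by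
  rw [incidence_fst_mul_transpose, Fintype.card_bool, Nat.cast_two, one_add_one_eq_two]

theorem incidence_mul_mul_transpose_apply [Fintype α] (f : α → β) (g : α → γ)
    (M : Matrix α α R) (b : β) (c : γ) :
    (incidence R f * M * (incidence R g)ᵀ) b c =
      ∑ a : {a // f a = b}, ∑ a' : {a' // g a' = c}, M a a' := by
  simp only [incidence, Matrix.mul_apply, Matrix.transpose_apply, Matrix.of_apply, ite_mul,
    one_mul, zero_mul, mul_ite, mul_one, mul_zero, ← Finset.sum_filter]
  rw [Finset.sum_comm, Finset.sum_subtype (p := fun a => f a = b) _ (by simp)]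
  exact Finset.sum_congr rfl fun a _ =>
    Finset.sum_subtype (p := fun a' => g a' = c) _ (by simp) _

variable {R}

theorem incidence_transpose_mulVec [Fintype β] (f : α → β) (z : β → R) :
    (incidence R f)ᵀ *ᵥ z = z ∘ f := by
  ext a
  simp [incidence, Matrix.mulVec, dotProduct]

theorem incidence_fst_mulVec [Fintype α] [Fintype β] (z : α × β → R) (a : α) :
    (incidence R Prod.fst *ᵥ z) a = ∑ b, z (a, b) := by
  simp [incidence, Matrix.mulVec, dotProduct, Fintype.sum_prod_type_right]

end Incidence

section PartialMatching

variable {H A : Type*} [Fintype H] [Fintype A] [DecidableEq H] [DecidableEq A]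

section CommRing

variable {R : Type*} [CommRing R] {S T : Matrix H A R} {E : Matrix H H R}

theorem add_transpose_sub_one_eq_mul_transpose (hS : Sᵀ * S = 1) (hT : Tᵀ * T = 1)
    (hE : (1 - T * Sᵀ) * E = 1) :
    E + Eᵀ - 1 = E * (1 - T * Tᵀ) * (E * (1 - T * Tᵀ))ᵀ := by
  have hE' : E * (T * Sᵀ) = E - 1 := by
    rw [eq_sub_iff_add_eq, ← eq_sub_iff_add_eq', ← mul_one_sub]
    exact (mul_eq_one_comm.1 hE).symm
  have hN : T * Sᵀ * (T * Sᵀ)ᵀ = T * Tᵀ := by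
    rw [Matrix.transpose_mul, Matrix.transpose_transpose, Matrix.mul_assoc,
      ← Matrix.mul_assoc Sᵀ, hS, Matrix.one_mul]
  have hProj : (1 - T * Tᵀ) * (1 - T * Tᵀ)ᵀ = 1 - T * Tᵀ := by
    have : T * Tᵀ * (T * Tᵀ) = T * Tᵀ := by
      rw [Matrix.mul_assoc, ← Matrix.mul_assoc Tᵀ, hT, Matrix.one_mul]
    simp [sub_mul, mul_sub, this]
  symm
  calc E * (1 - T * Tᵀ) * (E * (1 - T * Tᵀ))ᵀ
      = E * ((1 - T * Tᵀ) * (1 - T * Tᵀ)ᵀ) * Eᵀ := by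
        rw [Matrix.transpose_mul]; simp only [mul_assoc]
    _ = E * Eᵀ - E * (T * Sᵀ) * (E * (T * Sᵀ))ᵀ := by
        rw [hProj, ← hN, Matrix.transpose_mul E, mul_sub, sub_mul, mul_one]; simp only [mul_assoc]
    _ = E + Eᵀ - 1 := by
        rw [hE', Matrix.transpose_sub, Matrix.transpose_one]; noncomm_ring

theorem transpose_mul_one_sub (hT : Tᵀ * T = 1) : Tᵀ * (1 - T * Sᵀ) = Tᵀ - Sᵀ := by
  rw [Matrix.mul_sub, Matrix.mul_one, ← Matrix.mul_assoc, hT, Matrix.one_mul]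

theorem transpose_sub_transpose_mul (hT : Tᵀ * T = 1) (hE : (1 - T * Sᵀ) * E = 1) :
    (Tᵀ - Sᵀ) * E = Tᵀ := by
  rw [← transpose_mul_one_sub hT, Matrix.mul_assoc, hE, Matrix.mul_one]

theorem range_mulVecLin_mul_one_sub (hT : Tᵀ * T = 1) (hE : (1 - T * Sᵀ) * E = 1) :
    LinearMap.range (E * (1 - T * Tᵀ)).mulVecLin = LinearMap.ker (Tᵀ - Sᵀ).mulVecLin := by
  ext z
  simp only [LinearMap.mem_range, LinearMap.mem_ker, Matrix.mulVecLin_apply]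
  constructor
  · rintro ⟨y, rfl⟩
    rw [Matrix.mulVec_mulVec, ← Matrix.mul_assoc, transpose_sub_transpose_mul hT hE,
      transpose_mul_one_sub hT, sub_self, Matrix.zero_mulVec]
  · intro hz
    have hy : Tᵀ *ᵥ ((1 - T * Sᵀ) *ᵥ z) = 0 := by
      rw [Matrix.mulVec_mulVec, transpose_mul_one_sub hT, hz]
    refine ⟨(1 - T * Sᵀ) *ᵥ z, ?_⟩
    rw [← Matrix.mulVec_mulVec, Matrix.sub_mulVec 1 (T * Tᵀ), ← Matrix.mulVec_mulVec _ T, hy,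
      Matrix.one_mulVec, Matrix.mulVec_zero, sub_zero, Matrix.mulVec_mulVec, mul_eq_one_comm.1 hE,
      Matrix.one_mulVec]

end CommRing

variable {K : Type*} [Field K]

theorem finrank_ker_transpose_sub_add_card {S T : Matrix H A K} {E : Matrix H H K}
    (hT : Tᵀ * T = 1) (hE : (1 - T * Sᵀ) * E = 1) :
    Module.finrank K (LinearMap.ker (Tᵀ - Sᵀ).mulVecLin) + Fintype.card A = Fintype.card H := by
  have hsurj : LinearMap.range (Tᵀ - Sᵀ).mulVecLin = ⊤ := by
    refine LinearMap.range_eq_top.2 fun z => ⟨(E * T) *ᵥ z, ?_⟩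
    rw [Matrix.mulVecLin_apply, Matrix.mulVec_mulVec, ← Matrix.mul_assoc,
      transpose_sub_transpose_mul hT hE, hT, Matrix.one_mulVec]
  have h := LinearMap.finrank_range_add_finrank_ker (Tᵀ - Sᵀ).mulVecLin
  rw [hsurj, finrank_top, Module.finrank_fintype_fun_eq_card,
    Module.finrank_fintype_fun_eq_card] at h
  omega

theorem finrank_map_add_finrank_inf_ker {M N : Type*} [AddCommGroup M] [Module K M]
    [AddCommGroup N] [Module K N] [FiniteDimensional K M] (f : M →ₗ[K] N) (W : Submodule K M) :
    Module.finrank K (W.map f) + Module.finrank K (W ⊓ LinearMap.ker f : Submodule K M) =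
      Module.finrank K W := by
  have h := LinearMap.finrank_range_add_finrank_ker (f.domRestrict W)
  rwa [LinearMap.range_domRestrict, LinearMap.ker_domRestrict,
    ← Submodule.finrank_map_subtype_eq, Submodule.map_comap_subtype] at h

theorem rank_mul_add_transpose_sub_one_mul_transpose [LinearOrder K] [IsStrictOrderedRing K]
    {V : Type*} [Fintype V] {S T : Matrix H A K} {E : Matrix H H K} (P : Matrix V H K)
    (hS : Sᵀ * S = 1) (hT : Tᵀ * T = 1) (hE : (1 - T * Sᵀ) * E = 1) :
    (P * (E + Eᵀ - 1) * Pᵀ).rank +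
      Module.finrank K (LinearMap.ker (Tᵀ - Sᵀ).mulVecLin ⊓ LinearMap.ker P.mulVecLin :
        Submodule K (H → K)) + Fintype.card A = Fintype.card H := by
  have hgram : P * (E + Eᵀ - 1) * Pᵀ =
      P * (E * (1 - T * Tᵀ)) * (P * (E * (1 - T * Tᵀ)))ᵀ := by
    rw [add_transpose_sub_one_eq_mul_transpose hS hT hE, Matrix.transpose_mul P]
    simp only [Matrix.mul_assoc]
  rw [hgram, Matrix.rank_self_mul_transpose, Matrix.rank, Matrix.mulVecLin_mul,
    LinearMap.range_comp, range_mulVecLin_mul_one_sub hT hE, finrank_map_add_finrank_inf_ker,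
    finrank_ker_transpose_sub_add_card hT hE]

end PartialMatching

namespace BQuiv

variable {V A : Type} {Q : BQuiv V A}

section Walks

/-- `Q.IsWalk v u l` means that `l`, written from right to left, is a possibly trivial walk from
`u` to `v`. -/
def IsWalk (Q : BQuiv V A) : V → V → List (Letter A) → Prop
  | v, u, [] => v = u
  | v, u, c :: l => Q.ltgt c = v ∧ Q.IsWalk (Q.lsrc c) u l

theorem isWalk_append {v u : V} {l l' : List (Letter A)} :
    Q.IsWalk v u (l ++ l') ↔ ∃ w, Q.IsWalk v w l ∧ Q.IsWalk w u l' := by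
  induction l generalizing v with
  | nil => simp [IsWalk]
  | cons c l ih => simp [IsWalk, ih, and_assoc]

theorem walkChain_singleton (c : Letter A) : Q.WalkChain [c] :=
  List.isChain_singleton c

theorem walkChain_cons_cons {c d : Letter A} {l : List (Letter A)} :
    Q.WalkChain (c :: d :: l) ↔ Q.lsrc c = Q.ltgt d ∧ Q.WalkChain (d :: l) :=
  List.isChain_cons_cons

theorem isWalk_cons_iff {v u : V} {c : Letter A} {l : List (Letter A)} :
    Q.IsWalk v u (c :: l) ↔
      Q.ltgt c = v ∧ Q.WalkChain (c :: l) ∧ ∀ d, (c :: l).getLast? = some d → Q.lsrc d = u := by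
  induction l generalizing v c with
  | nil => simp [IsWalk, walkChain_singleton]
  | cons e l ih =>
    rw [IsWalk, ih, walkChain_cons_cons, List.getLast?_cons_cons]
    tauto

theorem exists_isWalk_self_iff {l : List (Letter A)} (hl : l ≠ []) :
    (∃ v, Q.IsWalk v v l) ↔ Q.WalkChain l ∧ Q.WalkClosed l := by
  obtain ⟨c, l, rfl⟩ := List.exists_cons_of_ne_nil hl
  simp [isWalk_cons_iff, WalkClosed]

@[simp] theorem lsrc_linv (c : Letter A) : Q.lsrc (linv c) = Q.ltgt c := by
  obtain ⟨a, _ | _⟩ := c <;> rfl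

@[simp] theorem ltgt_linv (c : Letter A) : Q.ltgt (linv c) = Q.lsrc c := by
  obtain ⟨a, _ | _⟩ := c <;> rfl

theorem eq_or_eq_linv_of_fst_eq {c d : Letter A} (h : c.1 = d.1) : d = c ∨ d = linv c := by
  obtain ⟨a, i⟩ := c
  obtain ⟨b, j⟩ := d
  obtain rfl : a = b := h
  cases i <;> cases j <;> simp [linv]

theorem IsWalk.reverse {v u : V} {l : List (Letter A)} (h : Q.IsWalk v u l) :
    Q.IsWalk u v (l.map linv).reverse := by
  induction l generalizing v with
  | nil => exact Eq.symm h
  | cons c l ih =>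
    rw [List.map_cons, List.reverse_cons, isWalk_append]
    exact ⟨_, ih h.2, ltgt_linv c, (lsrc_linv c).trans h.1⟩

theorem IsGentle.exists_isWalk (hQ : Q.IsGentle) (v u : V) : ∃ l, Q.IsWalk v u l := by
  induction hQ.connected u v with
  | refl => exact ⟨[], rfl⟩
  | tail _ hstep ih =>
    obtain ⟨l, hl⟩ := ih
    obtain ⟨a, ⟨rfl, rfl⟩ | ⟨rfl, rfl⟩⟩ := hstep
    · exact ⟨(a, true) :: l, rfl, hl⟩
    · exact ⟨(a, false) :: l, rfl, hl⟩

end Walks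

section SignedQuivers

variable {σ : A → ℤˣ}

/-- The sign of a walk in a quiver whose arrows carry signs `σ`. -/
def walkSign (σ : A → ℤˣ) (l : List (Letter A)) : ℤˣ := (l.map fun c => σ c.1).prod

@[simp] theorem walkSign_append (l l' : List (Letter A)) :
    walkSign σ (l ++ l') = walkSign σ l * walkSign σ l' := by
  simp [walkSign]

@[simp] theorem walkSign_cons (c : Letter A) (l : List (Letter A)) :
    walkSign σ (c :: l) = σ c.1 * walkSign σ l := by
  simp [walkSign]

theorem walkSign_reverse_map_linv (l : List (Letter A)) :
    walkSign σ (l.map linv).reverse = walkSign σ l := by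
  simp [walkSign, Function.comp_def, linv, List.prod_reverse]

/-- A signed quiver is balanced if all its closed walks have sign `1`. -/
def IsBalanced (Q : BQuiv V A) (σ : A → ℤˣ) : Prop :=
  ∀ v l, Q.IsWalk v v l → walkSign σ l = 1

theorem isBalanced_iff_noRepeatedEdges :
    Q.IsBalanced σ ↔ ∀ v l, Q.IsWalk v v l → NoRepeatedEdges l → walkSign σ l = 1 := by
  refine ⟨fun h v l hl _ => h v l hl, fun h v l hl => ?_⟩
  induction hn : l.length using Nat.strong_induction_on generalizing v l with
  | _ n ih =>
  by_cases hnd : NoRepeatedEdges l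
  · exact h v l hl hnd
  obtain ⟨x, c, y, d, z, rfl, hcd⟩ := exists_append_of_not_nodup_map hnd
  obtain ⟨w, hx, rfl, hl⟩ := isWalk_append.1 hl
  obtain ⟨w', hy, rfl, hz⟩ := isWalk_append.1 hl
  simp only [List.length_append, List.length_cons] at hn
  obtain rfl | rfl := eq_or_eq_linv_of_fst_eq hcd
  · have hxz : walkSign σ (x ++ d :: z) = 1 :=
      ih _ (by simp only [List.length_append, List.length_cons]; omega) v _
        (isWalk_append.2 ⟨_, hx, rfl, hz⟩) rfl
    have hdy : walkSign σ (d :: y) = 1 :=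
      ih _ (by simp only [List.length_cons]; omega) _ _ ⟨rfl, hy⟩ rfl
    calc walkSign σ (x ++ d :: (y ++ d :: z))
        = walkSign σ (x ++ d :: z) * walkSign σ (d :: y) := by
          simp only [walkSign_append, walkSign_cons]; ac_rfl
      _ = 1 := by rw [hxz, hdy, one_mul]
  · rw [ltgt_linv] at hy
    rw [lsrc_linv] at hz
    have hxz : walkSign σ (x ++ z) = 1 :=
      ih _ (by simp only [List.length_append]; omega) v _ (isWalk_append.2 ⟨_, hx, hz⟩) rfl
    have hy' : walkSign σ y = 1 := ih _ (by omega) _ _ hy rfl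
    calc walkSign σ (x ++ c :: (y ++ linv c :: z))
        = walkSign σ (x ++ z) * walkSign σ y * (σ c.1 * σ c.1) := by
          simp only [walkSign_append, walkSign_cons, linv]; ac_rfl
      _ = 1 := by rw [hxz, hy', one_mul, one_mul, Int.units_mul_self]

theorem IsBalanced.walkSign_eq (h : Q.IsBalanced σ) {v u : V} {l l' : List (Letter A)}
    (hl : Q.IsWalk v u l) (hl' : Q.IsWalk v u l') : walkSign σ l = walkSign σ l' := by
  have := h v (l ++ (l'.map linv).reverse) (isWalk_append.2 ⟨u, hl, hl'.reverse⟩)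
  rwa [walkSign_append, walkSign_reverse_map_linv, mul_eq_one_iff_eq_inv, Int.units_inv_eq_self]
    at this

/-- The potentials of a signed quiver: the functions on its vertices that are multiplied by
`σ a` along each arrow `a`. -/
def potentials (Q : BQuiv V A) (σ : A → ℤˣ) (K : Type*) [Ring K] : Submodule K (V → K) where
  carrier := {u | ∀ a, u (Q.tgt a) = σ a • u (Q.src a)}
  add_mem' hu hw a := by simp [hu a, hw a]
  zero_mem' := by simp
  smul_mem' k u hu a := by simp [hu a, mul_smul_comm]

theorem apply_eq_walkSign_smul {K : Type*} [Ring K] {u : V → K} (hu : u ∈ Q.potentials σ K)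
    {v w : V} {l : List (Letter A)} (hl : Q.IsWalk v w l) : u v = walkSign σ l • u w := by
  induction l generalizing v with
  | nil => obtain rfl : v = w := hl; simp [walkSign]
  | cons c l ih =>
    have hstep : u (Q.ltgt c) = σ c.1 • u (Q.lsrc c) := by
      obtain ⟨a, _ | _⟩ := c
      · simp [ltgt, lsrc, hu a, smul_smul, Int.units_mul_self]
      · exact hu a
    rw [← hl.1, hstep, ih hl.2, walkSign_cons, mul_smul]

variable {K : Type*} [DivisionRing K]

theorem finrank_potentials_of_isBalanced [Nonempty V] (hconn : ∀ v u, ∃ l, Q.IsWalk v u l)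
    (h : Q.IsBalanced σ) : Module.finrank K (Q.potentials σ K) = 1 := by
  obtain ⟨v₀⟩ := ‹Nonempty V›
  choose p hp using fun v => hconn v v₀
  have hmem : (fun v => walkSign σ (p v) • (1 : K)) ∈ Q.potentials σ K := fun a => by
    have : walkSign σ (p (Q.tgt a)) = walkSign σ ((a, true) :: p (Q.src a)) :=
      h.walkSign_eq (hp _) ⟨rfl, hp _⟩
    simp only [this, walkSign_cons, mul_smul]
  refine finrank_eq_one ⟨_, hmem⟩ (fun h0 => ?_) fun u => ⟨u.1 v₀, ?_⟩
  · have hsmul : walkSign σ (p v₀) • (1 : K) = 0 := congrFun (congrArg Subtype.val h0) v₀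
    exact one_ne_zero ((smul_eq_zero_iff_eq _).1 hsmul)
  · ext v
    simp [apply_eq_walkSign_smul u.2 (hp v)]

theorem finrank_potentials_of_not_isBalanced [NeZero (2 : K)]
    (hconn : ∀ v u, ∃ l, Q.IsWalk v u l) (h : ¬ Q.IsBalanced σ) :
    Module.finrank K (Q.potentials σ K) = 0 := by
  simp only [IsBalanced, not_forall] at h
  obtain ⟨v, l, hl, hsign⟩ := h
  suffices Q.potentials σ K = ⊥ by rw [this, finrank_bot]
  refine (Submodule.eq_bot_iff _).2 fun u hu => ?_
  have hv : u v = 0 := by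
    have h2 := apply_eq_walkSign_smul hu hl
    rw [(Int.units_eq_one_or _).resolve_left hsign, Units.neg_smul, one_smul,
      eq_neg_iff_add_eq_zero, ← two_mul] at h2
    exact (mul_eq_zero.1 h2).resolve_left two_ne_zero
  ext w
  obtain ⟨l', hl'⟩ := hconn w v
  simp [apply_eq_walkSign_smul hu hl', hv]

end SignedQuivers

section Strands

/-- A labelling of the two strands through each vertex by `Bool`: the arrow `a` leaves its source
on the strand `out a` and enters its target on the strand `into a`, no two arrows leave (or enter)
a vertex on the same strand, and a path of length two stays on one strand exactly when it is not
a relation. -/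
structure Strands (Q : BQuiv V A) where
  out : A → Bool
  into : A → Bool
  tail_injective : (fun a => (Q.src a, out a)).Injective
  head_injective : (fun a => (Q.tgt a, into a)).Injective
  out_eq_into_iff : ∀ a b, Q.src a = Q.tgt b → (out a = into b ↔ ¬ Q.rel a b)

theorem IsGentle.exists_into (hQ : Q.IsGentle) {out into₀ : A → Bool}
    (hout : (fun a => (Q.src a, out a)).Injective) (b : A) :
    ∃ t : Bool, (∀ a, Q.src a = Q.tgt b → (out a = t ↔ ¬ Q.rel a b)) ∧
      ((∀ a, Q.src a ≠ Q.tgt b) → t = into₀ b) := by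
  by_cases h : ∃ a₀, Q.src a₀ = Q.tgt b
  · obtain ⟨a₀, h₀⟩ := h
    refine ⟨if Q.rel a₀ b then !(out a₀) else out a₀, fun a ha => ?_, fun h => (h a₀ h₀).elim⟩
    have hiff : out a = out a₀ ↔ (Q.rel a b ↔ Q.rel a₀ b) := by
      constructor
      · intro h
        rw [hout (Prod.ext (ha.trans h₀.symm) h)]
      · intro h
        by_cases hr : Q.rel a b
        · rw [hQ.unique_rel_post b a a₀ hr (h.1 hr)]
        · rw [hQ.unique_nonrel_post b a a₀ ha h₀ hr (mt h.2 hr)]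
    by_cases hr : Q.rel a₀ b
    · simp [hr, hiff, Bool.eq_not]
    · simp [hr, hiff]
  · push Not at h
    exact ⟨into₀ b, fun a ha => (h a ha).elim, fun _ => rfl⟩

theorem IsGentle.nonempty_strands [Finite A] (hQ : Q.IsGentle) : Nonempty Q.Strands := by
  obtain ⟨out, hout⟩ := exists_injective_prodMk (γ := Bool) (f := Q.src) (by simpa using hQ.out_le)
  obtain ⟨into₀, hinto₀⟩ :=
    exists_injective_prodMk (γ := Bool) (f := Q.tgt) (by simpa using hQ.in_le)
  choose into hiff hinto using hQ.exists_into (into₀ := into₀) hout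
  refine ⟨out, into, hout, fun b b' h => ?_, fun a b => hiff b a⟩
  obtain ⟨hv, ht⟩ := Prod.mk.inj h
  by_cases ha : ∃ a, Q.src a = Q.tgt b
  · obtain ⟨a, ha⟩ := ha
    have ha' := ha.trans hv
    have hrel : ¬ Q.rel a b ↔ ¬ Q.rel a b' := by
      rw [← hiff b a ha, ← hiff b' a ha', ht]
    by_cases hr : Q.rel a b
    · exact hQ.unique_rel_pre a b b' hr (not_not.1 (mt hrel.2 (not_not.2 hr)))
    · exact hQ.unique_nonrel_pre a b b' ha ha' hr (hrel.1 hr)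
  · push Not at ha
    have ha' : ∀ a, Q.src a ≠ Q.tgt b' := fun a h => ha a (h.trans hv.symm)
    exact hinto₀ (Prod.ext hv ((hinto b ha).symm.trans (ht.trans (hinto b' ha'))))

/-- The sign `1` for `true` and `-1` for `false`. -/
def boolSign (b : Bool) : ℤˣ := if b then 1 else -1

@[simp] theorem boolSign_true : boolSign true = 1 := rfl

@[simp] theorem boolSign_false : boolSign false = -1 := rfl

theorem boolSign_mul_boolSign (b b' : Bool) :
    boolSign b * boolSign b' = if b = b' then 1 else -1 := by
  cases b <;> cases b' <;> rfl

namespace Strands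

variable (S : Q.Strands)

/-- The sign of an arrow: `1` if it enters and leaves on strands with the same label. -/
def sign (a : A) : ℤˣ := boolSign (S.out a) * boolSign (S.into a)

/-- The strand on which a letter leaves its source. -/
def srcStrand (c : Letter A) : Bool := if c.2 then S.out c.1 else S.into c.1

/-- The strand on which a letter enters its target. -/
def tgtStrand (c : Letter A) : Bool := if c.2 then S.into c.1 else S.out c.1

theorem neg_one_pow_rel {c d : Letter A} (h : Q.lsrc c = Q.ltgt d) (hcd : c.1 = d.1 → c = d) :
    (-1 : ℤˣ) ^ (if (c.2 = true ∧ d.2 = true ∧ Q.rel c.1 d.1) ∨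
        (c.2 = false ∧ d.2 = false ∧ Q.rel d.1 c.1) then 1 else 0) =
      (boolSign (S.srcStrand c) * boolSign c.2) * (boolSign (S.tgtStrand d) * boolSign d.2) := by
  rw [mul_mul_mul_comm, boolSign_mul_boolSign, boolSign_mul_boolSign]
  obtain ⟨a, _ | _⟩ := c <;> obtain ⟨b, _ | _⟩ := d
  · have := S.out_eq_into_iff b a h.symm
    by_cases hr : Q.rel b a <;> simp_all [srcStrand, tgtStrand, eq_comm]
  · have : S.into a ≠ S.into b := fun hs => by simpa using hcd (S.head_injective (Prod.ext h hs))
    simp [srcStrand, tgtStrand, this]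
  · have : S.out a ≠ S.out b := fun hs => by simpa using hcd (S.tail_injective (Prod.ext h hs))
    simp [srcStrand, tgtStrand, this]
  · have := S.out_eq_into_iff a b h
    by_cases hr : Q.rel a b <;> simp_all [srcStrand, tgtStrand]

end Strands

theorem IsWalk.lsrc_eq_ltgt_of_mem_zip {v u : V} {c x : Letter A} {l : List (Letter A)}
    (h : Q.IsWalk v u (c :: l)) (hx : Q.ltgt x = u) :
    ∀ p ∈ (c :: l).zip (l ++ [x]), Q.lsrc p.1 = Q.ltgt p.2 := by
  induction l generalizing v c with
  | nil => simpa [hx] using (show Q.lsrc c = u from h.2)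
  | cons d l ih =>
    simp only [List.cons_append, List.zip_cons_cons, List.forall_mem_cons]
    exact ⟨h.2.1.symm, ih h.2⟩

theorem IsWalk.lsrc_eq_ltgt_of_mem_zip_rotate {v : V} {l : List (Letter A)} (h : Q.IsWalk v v l) :
    ∀ p ∈ l.zip (l.rotate 1), Q.lsrc p.1 = Q.ltgt p.2 := by
  cases l with
  | nil => simp
  | cons c l => simpa using h.lsrc_eq_ltgt_of_mem_zip h.1

theorem Strands.neg_one_pow_relCount (S : Q.Strands) {v : V} {l : List (Letter A)}
    (hl : Q.IsWalk v v l) (hnd : NoRepeatedEdges l) :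
    (-1 : ℤˣ) ^ Q.relCount l = walkSign S.sign l := by
  have hpair : ∀ p ∈ l.zip (l.rotate 1), p.1.1 = p.2.1 → p.1 = p.2 := fun p hp =>
    List.inj_on_of_nodup_map hnd (List.of_mem_zip hp).1
      (List.mem_rotate.1 (List.of_mem_zip hp).2)
  rw [relCount, neg_one_pow_sum_map, List.map_congr_left fun p hp =>
      S.neg_one_pow_rel (hl.lsrc_eq_ltgt_of_mem_zip_rotate p hp) (hpair p hp),
    prod_map_zip (fun c => boolSign (S.srcStrand c) * boolSign c.2)
      (fun d => boolSign (S.tgtStrand d) * boolSign d.2) (List.length_rotate l 1).symm,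
    ((List.rotate_perm l 1).map _).prod_eq, ← List.prod_map_mul, walkSign]
  congr 1
  refine List.map_congr_left fun c _ => ?_
  obtain ⟨a, _ | _⟩ := c <;> simp [Strands.srcStrand, Strands.tgtStrand, Strands.sign, mul_comm]

theorem Strands.multiClock_iff_isBalanced (S : Q.Strands) : MultiClock Q ↔ Q.IsBalanced S.sign := by
  rw [isBalanced_iff_noRepeatedEdges]
  constructor
  · intro h v l hl hnd
    obtain rfl | hne := eq_or_ne l []
    · rfl
    obtain ⟨hchain, hclosed⟩ := (exists_isWalk_self_iff hne).1 ⟨v, hl⟩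
    rw [← S.neg_one_pow_relCount hl hnd, (h l hne hchain hclosed hnd).neg_one_pow]
  · intro h l hne hchain hclosed hnd
    obtain ⟨v, hl⟩ := (exists_isWalk_self_iff hne).2 ⟨hchain, hclosed⟩
    rw [← neg_one_pow_eq_one_iff_even (R := ℤˣ) (by decide), S.neg_one_pow_relCount hl hnd,
      h v l hl hnd]

end Strands

section Cartan

/-- `Q.Permits a b` means that `ab` is a permitted path of length two. -/
def Permits (Q : BQuiv V A) (a b : A) : Prop := Q.src a = Q.tgt b ∧ ¬ Q.rel a b

theorem isChain_permits_iff {l : List A} :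
    l.IsChain Q.Permits ↔ Q.PathChain l ∧ l.IsChain fun a b => ¬ Q.rel a b :=
  isChain_and_iff

theorem IsGentle.finite_isChain_permits [Finite A] (hQ : Q.IsGentle) :
    {l : List A | l.IsChain Q.Permits}.Finite := by
  obtain ⟨m, -, hm⟩ := hQ.admissible
  refine (List.finite_length_lt A m).subset fun l hl => ?_
  rw [Set.mem_ofPred_eq]
  by_contra! h
  obtain ⟨hpath, hperm⟩ := isChain_permits_iff.1 (List.IsChain.take hl m)
  exact hm (l.take m) (List.length_take_of_le h) hpath hperm

/-- The permitted paths from `j` to `i`, sorted by their last and first arrow `a` and `b`. -/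
def permittedPathEquiv (Q : BQuiv V A) (i j : V) :
    {p : Path Q // p.Permitted ∧ p.base = j ∧ p.tgtV = i} ≃
      PLift (i = j) ⊕ Σ a : {a // Q.tgt a = i}, Σ b : {b // Q.src b = j},
        ChainTail Q.Permits a b where
  toFun
    | ⟨⟨_, [], _, _⟩, h⟩ => .inl ⟨h.2.2.symm.trans h.2.1⟩
    | ⟨⟨_, a :: l, hpath, hbase⟩, h⟩ =>
      .inr ⟨⟨a, h.2.2⟩, ⟨(a :: l).getLast (List.cons_ne_nil a l),
        (hbase _ (List.getLast?_eq_some_getLast _)).trans h.2.1⟩,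
        ⟨l, isChain_permits_iff.2 ⟨hpath, h.1⟩, List.getLast?_eq_some_getLast _⟩⟩
  invFun
    | .inl h => ⟨⟨j, [], List.isChain_nil, by simp⟩, List.isChain_nil, rfl, h.down.symm⟩
    | .inr ⟨a, b, l⟩ => ⟨⟨j, a :: l.1, (isChain_permits_iff.1 l.2.1).1, fun c hc => by
        rw [← b.2, Option.some.inj (hc.symm.trans l.2.2)]⟩,
        (isChain_permits_iff.1 l.2.1).2, rfl, a.2⟩
  left_inv := by rintro ⟨⟨_, _ | ⟨a, l⟩, hpath, hbase⟩, hperm, rfl, rfl⟩ <;> rfl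
  right_inv := by
    rintro (h | ⟨⟨a, ha⟩, ⟨b, hb⟩, ⟨l, hchain, hlast⟩⟩)
    · rfl
    · obtain rfl := (List.getLast_eq_iff_getLast?_eq_some (List.cons_ne_nil a l)).2 hlast
      rfl

theorem map_cartan_eq (R : Type*) [CommRing R] [Fintype A] (hQ : Q.IsGentle) :
    (cartan Q).map ((↑) : ℤ → R) =
      1 + incidence R Q.tgt * chainMatrix R Q.Permits * (incidence R Q.src)ᵀ := by
  have := ChainTail.finite hQ.finite_isChain_permits
  ext i j
  rw [Matrix.add_apply, incidence_mul_mul_transpose_apply]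
  simp [cartan, chainMatrix, Nat.card_congr (permittedPathEquiv Q i j), Nat.card_sum,
    Nat.card_sigma, card_plift, Matrix.one_apply, -Nat.card_eq_fintype_card]

namespace Strands

variable (S : Q.Strands)

/-- The strand of its source on which an arrow leaves. -/
def tail (a : A) : V × Bool := (Q.src a, S.out a)

/-- The strand of its target on which an arrow enters. -/
def head (a : A) : V × Bool := (Q.tgt a, S.into a)

theorem tail_eq_head_iff (a b : A) : S.tail a = S.head b ↔ Q.Permits a b := by
  rw [tail, head, Prod.mk.injEq]
  exact and_congr_right (S.out_eq_into_iff a b)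

/-- The matrix whose entry at `(h, h')` counts the permitted paths that leave on the strand `h'` and
enter on the strand `h`; the summand `1` stands for the trivial paths. -/
noncomputable def strandMatrix (R : Type*) [CommRing R] [Fintype A] :
    Matrix (V × Bool) (V × Bool) R :=
  1 + incidence R S.head * chainMatrix R Q.Permits * (incidence R S.tail)ᵀ

theorem one_sub_mul_strandMatrix (R : Type*) [CommRing R] [Fintype V] [Fintype A]
    (hQ : Q.IsGentle) :
    (1 - incidence R S.head * (incidence R S.tail)ᵀ) * S.strandMatrix R = 1 := by
  have hrel : (incidence R S.tail)ᵀ * incidence R S.head = relMatrix R Q.Permits := by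
    simp only [incidence_transpose_mul_incidence, relMatrix, S.tail_eq_head_iff]
  have hchain : relMatrix R Q.Permits * chainMatrix R Q.Permits = chainMatrix R Q.Permits - 1 := by
    rw [← one_sub_relMatrix_mul_chainMatrix R hQ.finite_isChain_permits]
    noncomm_ring
  rw [strandMatrix, mul_add, mul_one, sub_mul, one_mul, ← Matrix.mul_assoc, ← Matrix.mul_assoc,
    Matrix.mul_assoc _ _ (incidence R S.head), hrel, Matrix.mul_assoc _ (relMatrix R _), hchain,
    Matrix.mul_sub, Matrix.sub_mul, Matrix.mul_one]
  abel

theorem map_cartan_eq_mul_strandMatrix_mul (R : Type*) [CommRing R] [Fintype V] [Fintype A]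
    (hQ : Q.IsGentle) :
    (cartan Q).map ((↑) : ℤ → R) =
      incidence R (Prod.fst : V × Bool → V) * S.strandMatrix R *
        (incidence R (Prod.fst : V × Bool → V))ᵀ - 1 := by
  have hhead : incidence R Q.tgt = incidence R (Prod.fst : V × Bool → V) * incidence R S.head :=
    (incidence_mul_incidence R Prod.fst S.head).symm
  have htail : incidence R Q.src = incidence R (Prod.fst : V × Bool → V) * incidence R S.tail :=
    (incidence_mul_incidence R Prod.fst S.tail).symm
  rw [map_cartan_eq R hQ, strandMatrix, Matrix.mul_add, Matrix.add_mul, Matrix.mul_one,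
    incidence_fst_bool_mul_transpose, hhead, htail, Matrix.transpose_mul]
  simp only [Matrix.mul_assoc]
  abel

theorem map_cartan_add_transpose_eq (R : Type*) [CommRing R] [Fintype V] [Fintype A]
    (hQ : Q.IsGentle) :
    (cartan Q + (cartan Q)ᵀ).map ((↑) : ℤ → R) =
      incidence R (Prod.fst : V × Bool → V) * (S.strandMatrix R + (S.strandMatrix R)ᵀ - 1) *
        (incidence R (Prod.fst : V × Bool → V))ᵀ := by
  rw [Matrix.map_add _ Int.cast_add, Matrix.transpose_map,
    S.map_cartan_eq_mul_strandMatrix_mul R hQ, Matrix.mul_sub, Matrix.mul_add, Matrix.sub_mul,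
    Matrix.add_mul, Matrix.mul_one, incidence_fst_bool_mul_transpose]
  simp only [Matrix.transpose_sub, Matrix.transpose_mul, Matrix.transpose_transpose,
    Matrix.transpose_one, Matrix.mul_assoc]
  abel

end Strands

end Cartan

section Kernel

variable (K : Type*) [Field K]

/-- The function on strands that takes opposite values on the two strands through each vertex and
restricts to `u` on the strands labelled `true`. -/
def alternating (V : Type*) : (V → K) →ₗ[K] V × Bool → K where
  toFun u h := boolSign h.2 • u h.1
  map_add' u u' := by ext h; simp
  map_smul' c u := by ext h; simp [mul_smul_comm]

variable {K}

theorem alternating_apply (u : V → K) (h : V × Bool) :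
    alternating K V u h = boolSign h.2 • u h.1 := rfl

theorem alternating_injective : Function.Injective (alternating K V) := fun u u' h => by
  ext v
  simpa [alternating_apply] using congrFun h (v, true)

theorem ker_mulVecLin_incidence_fst [Fintype V] :
    LinearMap.ker (incidence K (Prod.fst : V × Bool → V)).mulVecLin =
      LinearMap.range (alternating K V) := by
  ext z
  rw [LinearMap.mem_ker, Matrix.mulVecLin_apply, LinearMap.mem_range]
  constructor
  · intro hz
    refine ⟨fun v => z (v, true), ?_⟩
    ext ⟨v, b⟩
    have h := congrFun hz v
    rw [incidence_fst_mulVec, Fintype.sum_bool] at h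
    cases b
    · simpa [alternating_apply] using neg_eq_of_add_eq_zero_right h
    · simp [alternating_apply]
  · rintro ⟨u, rfl⟩
    ext v
    simp [incidence_fst_mulVec, alternating_apply]

namespace Strands

variable (S : Q.Strands)

theorem comap_alternating_ker [Fintype V] :
    (LinearMap.ker ((incidence K S.head)ᵀ - (incidence K S.tail)ᵀ).mulVecLin).comap
      (alternating K V) = potentials Q S.sign K := by
  ext u
  simp only [Submodule.mem_comap, LinearMap.mem_ker, Matrix.mulVecLin_apply, Matrix.sub_mulVec,
    incidence_transpose_mulVec, sub_eq_zero, funext_iff]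
  refine forall_congr' fun a => ?_
  rw [Function.comp_apply, Function.comp_apply, alternating_apply, alternating_apply,
    smul_eq_iff_eq_inv_smul, Int.units_inv_eq_self, smul_smul, mul_comm]
  rfl

theorem finrank_ker_inf_ker [Fintype V] :
    Module.finrank K (LinearMap.ker ((incidence K S.head)ᵀ - (incidence K S.tail)ᵀ).mulVecLin ⊓
        LinearMap.ker (incidence K (Prod.fst : V × Bool → V)).mulVecLin :
        Submodule K (V × Bool → K)) =
      Module.finrank K (potentials Q S.sign K) := by
  rw [ker_mulVecLin_incidence_fst, inf_comm, ← Submodule.map_comap_eq, S.comap_alternating_ker]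
  exact (Submodule.equivMapOfInjective _ alternating_injective _).finrank_eq.symm

end Strands

theorem finrank_potentials [NeZero (2 : K)] [Nonempty V] (hQ : Q.IsGentle) (S : Q.Strands) :
    Module.finrank K (potentials Q S.sign K) = if MultiClock Q then 1 else 0 := by
  rw [S.multiClock_iff_isBalanced]
  split_ifs with h
  · exact finrank_potentials_of_isBalanced hQ.exists_isWalk h
  · exact finrank_potentials_of_not_isBalanced hQ.exists_isWalk h

end Kernel

end BQuiv

theorem stmt11_general {K : Type*} {V A : Type} [Field K] [LinearOrder K] [IsStrictOrderedRing K]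
    [Fintype V] [Fintype A] (Q : BQuiv V A) (hQ : Q.IsGentle) :
    ((cartan Q + (cartan Q)ᵀ).map ((↑) : ℤ → K)).rank + (if MultiClock Q then 1 else 0) +
      Fintype.card A = 2 * Fintype.card V := by
  obtain ⟨a⟩ := hQ.has_arrow
  have : Nonempty V := ⟨Q.src a⟩
  obtain ⟨S⟩ := hQ.nonempty_strands
  have hrank := rank_mul_add_transpose_sub_one_mul_transpose
    (S := incidence K S.tail) (T := incidence K S.head) (incidence K (Prod.fst : V × Bool → V))
    (incidence_transpose_mul_self K S.tail_injective)
    (incidence_transpose_mul_self K S.head_injective) (S.one_sub_mul_strandMatrix K hQ)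
  rw [← S.map_cartan_add_transpose_eq K hQ, S.finrank_ker_inf_ker, finrank_potentials hQ,
    Fintype.card_prod, Fintype.card_bool] at hrank
  rw [hrank, mul_comm]

/-- Let `(Q, I)` be a gentle bound quiver with Cartan matrix `C` and
let `δ = 1` if `(Q, I)` satisfies the multi-clock condition and `δ = 0` otherwise.
Then the rank over `ℚ` of the symmetric matrix `C + Cᵀ` equals `2|Q₀| - |Q₁| - δ`;
equivalently, its corank equals `|Q₁| - |Q₀| + δ`. -/
theorem stmt11 {V A : Type} [Fintype V] [Fintype A] [DecidableEq V]
    (Q : BQuiv V A) (hQ : Q.IsGentle) :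
    ((((cartan Q + (cartan Q)ᵀ).map ((↑) : ℤ → ℚ)).rank : ℤ) =
        2 * Fintype.card V - Fintype.card A -
          (if MultiClock Q then 1 else 0)) ∧
    ((Fintype.card V : ℤ) - (((cartan Q + (cartan Q)ᵀ).map ((↑) : ℤ → ℚ)).rank : ℤ) =
        (Fintype.card A : ℤ) - Fintype.card V +
          (if MultiClock Q then 1 else 0)) := by
  have h := stmt11_general (K := ℚ) Q hQ
  split_ifs at h ⊢ <;> omega
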